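/- For every Ω ∈ 𝔖₂ and every z ∈ ℂ², the following three quadratic theta relations hold (equations (E7)–(E9)): A8²·X1² − A5²·X2² − A9²·X4² + A6²·X5² = 0, A3²·X1² − A1²·X2² + A7²·X5² − A9²·X6² = 0, and A4²·X1² − A2²·X2² + A7²·X4² − A6²·X6² = 0. -/

import Mathlib

/-!
The relations are polynomial identities in second-order theta functions. For integral
characteristics `α`, `β`, multiplying the series of `θ[α/2;β/2](x,Ω)` by itself and changing the
summation indices `(n, m)` to half-sum and half-difference gives the addition formula

`θ[α/2;β/2](x,Ω)² = ∑_{σ ∈ {0,1}²} (-1)^{(σ+α)·β} Θ[σ+α](2x) Θ[σ](0)`,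

with `Θ[σ](u) = θ[σ/2;0](u,2Ω)` (`theta2_sq`). Since `Θ[σ]` depends only on `σ` modulo `2`
(`secondOrder_add_two`), each `A²` becomes a quadratic form in the four constants `Θ[σ](0)`, each
`X²` a bilinear form in the values `Θ[σ](4z)` and those constants, and the three relations hold
identically in these eight quantities. The rearrangement is legitimate because the theta series
converges absolutely on the Siegel half space (`summable_norm_thetaTerm`): positive definiteness in
dimension two gives `vᵀ(Im Ω)v ≥ ε|v|²`, which dominates the series by a product of two
one-variable Jacobi theta series.
-/


open Complex

/-- Genus-2 theta function with characteristics. -/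
noncomputable def theta2 (a b : Fin 2 → ℝ) (z : Fin 2 → ℂ)
    (Ω : Matrix (Fin 2) (Fin 2) ℂ) : ℂ :=
  ∑' n : Fin 2 → ℤ,
    Complex.exp ((Real.pi : ℂ) * I *
        (∑ i, ∑ j, ((n i : ℂ) + (a i : ℂ)) * Ω i j * ((n j : ℂ) + (a j : ℂ)))
      + 2 * (Real.pi : ℂ) * I * (∑ i, ((n i : ℂ) + (a i : ℂ)) * (z i + (b i : ℂ))))

/-- The Siegel upper half space of degree 2. -/
def IsSiegel (Ω : Matrix (Fin 2) (Fin 2) ℂ) : Prop :=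
  Ω.IsSymm ∧ (Matrix.of fun i j => (Ω i j).im).PosDef

noncomputable def A₁ (Ω : Matrix (Fin 2) (Fin 2) ℂ) : ℂ := theta2 ![0, 0] ![0, 0] 0 Ω
noncomputable def A₂ (Ω : Matrix (Fin 2) (Fin 2) ℂ) : ℂ := theta2 ![0, 0] ![0, 1/2] 0 Ω
noncomputable def A₃ (Ω : Matrix (Fin 2) (Fin 2) ℂ) : ℂ := theta2 ![0, 0] ![1/2, 0] 0 Ω
noncomputable def A₄ (Ω : Matrix (Fin 2) (Fin 2) ℂ) : ℂ := theta2 ![0, 0] ![1/2, 1/2] 0 Ω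
noncomputable def A₅ (Ω : Matrix (Fin 2) (Fin 2) ℂ) : ℂ := theta2 ![0, 1/2] ![0, 0] 0 Ω
noncomputable def A₆ (Ω : Matrix (Fin 2) (Fin 2) ℂ) : ℂ := theta2 ![1/2, 0] ![0, 0] 0 Ω
noncomputable def A₇ (Ω : Matrix (Fin 2) (Fin 2) ℂ) : ℂ := theta2 ![1/2, 1/2] ![0, 0] 0 Ω
noncomputable def A₈ (Ω : Matrix (Fin 2) (Fin 2) ℂ) : ℂ := theta2 ![0, 1/2] ![1/2, 0] 0 Ω
noncomputable def A₉ (Ω : Matrix (Fin 2) (Fin 2) ℂ) : ℂ := theta2 ![1/2, 0] ![0, 1/2] 0 Ω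
noncomputable def A₁₀ (Ω : Matrix (Fin 2) (Fin 2) ℂ) : ℂ := theta2 ![1/2, 1/2] ![1/2, 1/2] 0 Ω

noncomputable def X₁ (z : Fin 2 → ℂ) (Ω : Matrix (Fin 2) (Fin 2) ℂ) : ℂ :=
  theta2 ![0, 1/2] ![0, 1/2] (fun i => 2 * z i) Ω
noncomputable def X₂ (z : Fin 2 → ℂ) (Ω : Matrix (Fin 2) (Fin 2) ℂ) : ℂ :=
  theta2 ![0, 1/2] ![1/2, 1/2] (fun i => 2 * z i) Ω
noncomputable def X₃ (z : Fin 2 → ℂ) (Ω : Matrix (Fin 2) (Fin 2) ℂ) : ℂ :=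
  theta2 ![1/2, 1/2] ![0, 1/2] (fun i => 2 * z i) Ω
noncomputable def X₄ (z : Fin 2 → ℂ) (Ω : Matrix (Fin 2) (Fin 2) ℂ) : ℂ :=
  theta2 ![1/2, 0] ![1/2, 0] (fun i => 2 * z i) Ω
noncomputable def X₅ (z : Fin 2 → ℂ) (Ω : Matrix (Fin 2) (Fin 2) ℂ) : ℂ :=
  theta2 ![1/2, 0] ![1/2, 1/2] (fun i => 2 * z i) Ω
noncomputable def X₆ (z : Fin 2 → ℂ) (Ω : Matrix (Fin 2) (Fin 2) ℂ) : ℂ :=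
  theta2 ![1/2, 1/2] ![1/2, 0] (fun i => 2 * z i) Ω


/-- The general term of the series defining `theta2`. -/
noncomputable def thetaTerm (a b : Fin 2 → ℝ) (z : Fin 2 → ℂ)
    (Ω : Matrix (Fin 2) (Fin 2) ℂ) (n : Fin 2 → ℤ) : ℂ :=
  Complex.exp ((Real.pi : ℂ) * I *
        (∑ i, ∑ j, ((n i : ℂ) + (a i : ℂ)) * Ω i j * ((n j : ℂ) + (a j : ℂ)))
      + 2 * (Real.pi : ℂ) * I * (∑ i, ((n i : ℂ) + (a i : ℂ)) * (z i + (b i : ℂ))))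

lemma theta2_eq (a b : Fin 2 → ℝ) (z : Fin 2 → ℂ) (Ω : Matrix (Fin 2) (Fin 2) ℂ) :
    theta2 a b z Ω = ∑' n, thetaTerm a b z Ω n := rfl

/-- A positive definite binary form dominates a positive multiple of `x² + y²`. -/
lemma exists_lower_bound (p q r : ℝ) (hp : 0 < p) (hdet : 0 < p * r - q ^ 2) :
    ∃ ε : ℝ, 0 < ε ∧ ∀ x y : ℝ, ε * (x ^ 2 + y ^ 2) ≤ p * x ^ 2 + 2 * q * x * y + r * y ^ 2 := by
  have hr : 0 < r := by
    by_contra h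
    nlinarith [sq_nonneg q]
  -- `det / trace` is at most the smaller eigenvalue.
  refine ⟨(p * r - q ^ 2) / (p + r), by positivity, fun x y => ?_⟩
  rw [div_mul_eq_mul_div, div_le_iff₀ (by positivity)]
  nlinarith [sq_nonneg (p * x + q * y), sq_nonneg (q * x + r * y)]

lemma IsSiegel.exists_bound {Ω : Matrix (Fin 2) (Fin 2) ℂ} (hΩ : IsSiegel Ω) :
    ∃ ε : ℝ, 0 < ε ∧ ∀ v : Fin 2 → ℝ,
      ε * (v 0 ^ 2 + v 1 ^ 2) ≤ ∑ i, ∑ j, v i * (Ω i j).im * v j := by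
  obtain ⟨hs, hpos⟩ := hΩ
  have hp := hpos.diag_pos (i := 0)
  have hd := hpos.det_pos
  have h10 : Ω 1 0 = Ω 0 1 := hs.apply 0 1
  simp only [Matrix.det_fin_two, Matrix.of_apply, h10] at hp hd
  obtain ⟨ε, hε, h⟩ := exists_lower_bound (Ω 0 0).im (Ω 0 1).im (Ω 1 1).im hp (by nlinarith)
  refine ⟨ε, hε, fun v => (h (v 0) (v 1)).trans (le_of_eq ?_)⟩
  simp only [Fin.sum_univ_two, h10]
  ring

/-- Absolute convergence of the theta series on the Siegel half space. -/
lemma summable_norm_thetaTerm {Ω : Matrix (Fin 2) (Fin 2) ℂ} (hΩ : IsSiegel Ω)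
    (a b : Fin 2 → ℝ) (z : Fin 2 → ℂ) : Summable fun n => ‖thetaTerm a b z Ω n‖ := by
  obtain ⟨ε, hε, hbound⟩ := hΩ.exists_bound
  have h1 : ∀ i : Fin 2, Summable fun k : ℤ =>
      ‖jacobiTheta₂_term k (I * (ε * a i + (z i).im : ℝ)) (I * (ε : ℝ))‖ := fun i =>
    ((summable_jacobiTheta₂_term_iff _ _).2 (by simpa using hε)).norm
  have h2 := ((h1 0).mul_of_nonneg (h1 1) (fun _ => norm_nonneg _) (fun _ => norm_nonneg _))
  have h3 := ((finTwoArrowEquiv ℤ).summable_iff.2 h2).mul_left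
    (Real.exp (-Real.pi * ε * (a 0 ^ 2 + a 1 ^ 2)
      - 2 * Real.pi * (a 0 * (z 0).im + a 1 * (z 1).im)))
  refine Summable.of_nonneg_of_le (fun _ => norm_nonneg _) (fun n => ?_) h3
  simp only [Function.comp_apply, finTwoArrowEquiv_apply, norm_jacobiTheta₂_term, thetaTerm,
    Complex.norm_exp, ← Real.exp_add]
  rw [Real.exp_le_exp]
  have hb := mul_le_mul_of_nonneg_left (hbound fun i => n i + a i) Real.pi_pos.le
  simp only [Fin.sum_univ_two] at hb ⊢
  simp at hb ⊢
  nlinarith [hb]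

/-- The second-order theta function `Θ[σ](u) = θ[σ/2;0](u,2Ω)`, for an integral characteristic. -/
noncomputable def secondOrder (Ω : Matrix (Fin 2) (Fin 2) ℂ) (σ : Fin 2 → ℕ) (u : Fin 2 → ℂ) : ℂ :=
  theta2 (fun i => (σ i : ℝ) / 2) 0 u ((2 : ℂ) • Ω)

lemma secondOrder_add_two (Ω : Matrix (Fin 2) (Fin 2) ℂ) (σ γ : Fin 2 → ℕ) (u : Fin 2 → ℂ) :
    secondOrder Ω (fun i => σ i + 2 * γ i) u = secondOrder Ω σ u := by
  unfold secondOrder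
  rw [theta2_eq, theta2_eq]
  rw [← (Equiv.addRight (fun i => (γ i : ℤ))).tsum_eq (thetaTerm (fun i => (σ i : ℝ) / 2) 0 u _)]
  refine tsum_congr fun n => ?_
  simp only [thetaTerm, Fin.sum_univ_two, Equiv.coe_addRight, Pi.add_apply]
  push_cast
  congr 1
  ring

lemma IsSiegel.two_smul {Ω : Matrix (Fin 2) (Fin 2) ℂ} (hΩ : IsSiegel Ω) :
    IsSiegel ((2 : ℂ) • Ω) := by
  refine ⟨hΩ.1.smul _, ?_⟩
  have h := hΩ.2.smul (show (0 : ℝ) < 2 by norm_num)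
  convert h using 1
  ext i j
  simp

/-- The change of summation indices: `(n, m)` with `n - m ≡ σ (mod 2)` is parametrized by
`n = k + l + σ`, `m = k - l`, so that half-sum and half-difference are `k + σ/2` and `l + σ/2`. -/
def splitIndex (p : (Fin 2 → Fin 2) × ((Fin 2 → ℤ) × (Fin 2 → ℤ))) :
    (Fin 2 → ℤ) × (Fin 2 → ℤ) :=
  (fun i => p.2.1 i + p.2.2 i + ((p.1 i : ℕ) : ℤ), fun i => p.2.1 i - p.2.2 i)

lemma splitIndex_bijective : Function.Bijective splitIndex := by
  constructor
  · rintro ⟨σ, k, l⟩ ⟨σ', k', l'⟩ h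
    simp only [splitIndex, Prod.mk.injEq, funext_iff] at h
    obtain ⟨h1, h2⟩ := h
    have key : ∀ i, σ i = σ' i ∧ k i = k' i ∧ l i = l' i := fun i => by
      have a1 := h1 i
      have a2 := h2 i
      rw [Fin.ext_iff]
      omega
    simp only [Prod.mk.injEq, funext_iff]
    exact ⟨fun i => (key i).1, fun i => (key i).2.1, fun i => (key i).2.2⟩
  · rintro ⟨n, m⟩
    refine ⟨(fun i => ⟨((n i - m i) % 2).toNat, by omega⟩,
      fun i => m i + (n i - m i) / 2, fun i => (n i - m i) / 2), ?_⟩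
    simp only [splitIndex, Prod.mk.injEq, funext_iff]
    constructor <;> intro i <;> omega

lemma thetaTerm_split (Ω : Matrix (Fin 2) (Fin 2) ℂ) (α β : Fin 2 → ℕ) (x : Fin 2 → ℂ)
    (σ : Fin 2 → Fin 2) (k l : Fin 2 → ℤ) :
    thetaTerm (fun i => (α i : ℝ) / 2) (fun i => (β i : ℝ) / 2) x Ω (splitIndex (σ, k, l)).1 *
      thetaTerm (fun i => (α i : ℝ) / 2) (fun i => (β i : ℝ) / 2) x Ω (splitIndex (σ, k, l)).2 =
    (-1) ^ (∑ i, ((σ i : ℕ) + α i) * β i) *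
      (thetaTerm (fun i => (((σ i : ℕ) + α i : ℕ) : ℝ) / 2) 0 (fun i => 2 * x i) ((2 : ℂ) • Ω) k *
        thetaTerm (fun i => ((σ i : ℕ) : ℝ) / 2) 0 0 ((2 : ℂ) • Ω) l) := by
  rw [← Complex.exp_pi_mul_I, ← Complex.exp_nat_mul]
  simp only [thetaTerm, ← Complex.exp_add]
  rw [Complex.exp_eq_exp_iff_exists_int]
  refine ⟨∑ i, k i * β i, ?_⟩
  simp only [splitIndex, Fin.sum_univ_two, Matrix.smul_apply, Pi.zero_apply, smul_eq_mul]
  push_cast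
  ring

/-- The addition formula expressing the square of a theta function with half-integral
characteristics through second-order theta functions. -/
lemma theta2_sq {Ω : Matrix (Fin 2) (Fin 2) ℂ} (hΩ : IsSiegel Ω) (α β : Fin 2 → ℕ)
    (x : Fin 2 → ℂ) :
    theta2 (fun i => (α i : ℝ) / 2) (fun i => (β i : ℝ) / 2) x Ω ^ 2 =
      ∑ σ : Fin 2 → Fin 2, (-1) ^ (∑ i, ((σ i : ℕ) + α i) * β i) *
        (secondOrder Ω (fun i => (σ i : ℕ) + α i) (fun i => 2 * x i) *
          secondOrder Ω (fun i => (σ i : ℕ)) 0) := by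
  have hs := summable_norm_thetaTerm hΩ (fun i => (α i : ℝ) / 2) (fun i => (β i : ℝ) / 2) x
  have hsum := summable_mul_of_summable_norm hs hs
  have hsum' := (Equiv.ofBijective _ splitIndex_bijective).summable_iff.2 hsum
  rw [theta2_eq, sq, tsum_mul_tsum_of_summable_norm hs hs,
    ← (Equiv.ofBijective _ splitIndex_bijective).tsum_eq]
  refine (Summable.tsum_prod hsum').trans ?_
  rw [tsum_fintype]
  refine Finset.sum_congr rfl fun σ _ => ?_
  have e1 := summable_norm_thetaTerm hΩ.two_smul (fun i => (((σ i : ℕ) + α i : ℕ) : ℝ) / 2) 0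
    (fun i => 2 * x i)
  have e2 := summable_norm_thetaTerm hΩ.two_smul (fun i => ((σ i : ℕ) : ℝ) / 2) 0 0
  unfold secondOrder
  rw [theta2_eq, theta2_eq, tsum_mul_tsum_of_summable_norm e1 e2, ← tsum_mul_left]
  exact tsum_congr fun p => thetaTerm_split Ω α β x σ p.1 p.2

/-- `theta2_sq` with the characteristics given by coordinates and the sum over `σ` written out. -/
lemma theta2_sq_expand {Ω : Matrix (Fin 2) (Fin 2) ℂ} (hΩ : IsSiegel Ω) (i j k l : ℕ)
    (a b : Fin 2 → ℝ) (ha : a = ![(i : ℝ) / 2, (j : ℝ) / 2]) (hb : b = ![(k : ℝ) / 2, (l : ℝ) / 2])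
    (x : Fin 2 → ℂ) :
    theta2 a b x Ω ^ 2 =
      (-1) ^ (i * k + j * l) *
        (secondOrder Ω ![i, j] (fun i => 2 * x i) * secondOrder Ω ![0, 0] 0
        + (-1) ^ l * (secondOrder Ω ![i, 1 + j] (fun i => 2 * x i) * secondOrder Ω ![0, 1] 0)
        + (-1) ^ k * (secondOrder Ω ![1 + i, j] (fun i => 2 * x i) * secondOrder Ω ![1, 0] 0)
        + (-1) ^ (k + l) *
          (secondOrder Ω ![1 + i, 1 + j] (fun i => 2 * x i) * secondOrder Ω ![1, 1] 0)) := by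
  have h := theta2_sq hΩ ![i, j] ![k, l] x
  have ha' : (fun t => ((![i, j] t : ℕ) : ℝ) / 2) = a := by
    rw [ha]; ext t; fin_cases t <;> rfl
  have hb' : (fun t => ((![k, l] t : ℕ) : ℝ) / 2) = b := by
    rw [hb]; ext t; fin_cases t <;> rfl
  have hv : ∀ f : Fin 2 → ℕ, f = ![f 0, f 1] := fun f => by
    ext t; fin_cases t <;> rfl
  rw [ha', hb'] at h
  rw [h, ← (finTwoArrowEquiv (Fin 2)).symm.sum_comp, Fintype.sum_prod_type]
  simp only [Fin.sum_univ_two, finTwoArrowEquiv_symm_apply]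
  rw [hv (fun t => ((![(0 : Fin 2), 0] t : Fin 2) : ℕ) + ![i, j] t),
    hv (fun t => ((![(0 : Fin 2), 1] t : Fin 2) : ℕ) + ![i, j] t),
    hv (fun t => ((![(1 : Fin 2), 0] t : Fin 2) : ℕ) + ![i, j] t),
    hv (fun t => ((![(1 : Fin 2), 1] t : Fin 2) : ℕ) + ![i, j] t),
    hv (fun t => ((![(0 : Fin 2), 0] t : Fin 2) : ℕ)),
    hv (fun t => ((![(0 : Fin 2), 1] t : Fin 2) : ℕ)),
    hv (fun t => ((![(1 : Fin 2), 0] t : Fin 2) : ℕ)),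
    hv (fun t => ((![(1 : Fin 2), 1] t : Fin 2) : ℕ))]
  simp only [Matrix.cons_val_zero, Matrix.cons_val_one, Fin.val_zero, Fin.val_one, zero_add]
  ring

theorem theta_relations_E7_E9
    (Ω : Matrix (Fin 2) (Fin 2) ℂ) (hΩ : IsSiegel Ω) (z : Fin 2 → ℂ) :
    (A₈ Ω ^ 2 * X₁ z Ω ^ 2 - A₅ Ω ^ 2 * X₂ z Ω ^ 2 - A₉ Ω ^ 2 * X₄ z Ω ^ 2 + A₆ Ω ^ 2 * X₅ z Ω ^ 2 = 0) ∧
    (A₃ Ω ^ 2 * X₁ z Ω ^ 2 - A₁ Ω ^ 2 * X₂ z Ω ^ 2 + A₇ Ω ^ 2 * X₅ z Ω ^ 2 - A₉ Ω ^ 2 * X₆ z Ω ^ 2 = 0) ∧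
    (A₄ Ω ^ 2 * X₁ z Ω ^ 2 - A₂ Ω ^ 2 * X₂ z Ω ^ 2 + A₇ Ω ^ 2 * X₄ z Ω ^ 2 - A₆ Ω ^ 2 * X₆ z Ω ^ 2 = 0) := by
  have r20 : ∀ j u, secondOrder Ω ![2, j] u = secondOrder Ω ![0, j] u := fun j u => by
    rw [← secondOrder_add_two Ω ![0, j] ![1, 0] u]
    congr 1; ext t; fin_cases t <;> simp
  have r02 : ∀ i u, secondOrder Ω ![i, 2] u = secondOrder Ω ![i, 0] u := fun i u => by
    rw [← secondOrder_add_two Ω ![i, 0] ![0, 1] u]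
    congr 1; ext t; fin_cases t <;> simp
  have h0 : (fun i : Fin 2 => 2 * (0 : Fin 2 → ℂ) i) = 0 := by ext; simp
  have a1 := theta2_sq_expand hΩ 0 0 0 0 ![0, 0] ![0, 0] (by simp) (by simp) 0
  have a2 := theta2_sq_expand hΩ 0 0 0 1 ![0, 0] ![0, 1/2] (by simp) (by simp) 0
  have a3 := theta2_sq_expand hΩ 0 0 1 0 ![0, 0] ![1/2, 0] (by simp) (by simp) 0
  have a4 := theta2_sq_expand hΩ 0 0 1 1 ![0, 0] ![1/2, 1/2] (by simp) (by simp) 0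
  have a5 := theta2_sq_expand hΩ 0 1 0 0 ![0, 1/2] ![0, 0] (by simp) (by simp) 0
  have a6 := theta2_sq_expand hΩ 1 0 0 0 ![1/2, 0] ![0, 0] (by simp) (by simp) 0
  have a7 := theta2_sq_expand hΩ 1 1 0 0 ![1/2, 1/2] ![0, 0] (by simp) (by simp) 0
  have a8 := theta2_sq_expand hΩ 0 1 1 0 ![0, 1/2] ![1/2, 0] (by simp) (by simp) 0
  have a9 := theta2_sq_expand hΩ 1 0 0 1 ![1/2, 0] ![0, 1/2] (by simp) (by simp) 0
  have x1 := theta2_sq_expand hΩ 0 1 0 1 ![0, 1/2] ![0, 1/2] (by simp) (by simp) (fun i => 2 * z i)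
  have x2 := theta2_sq_expand hΩ 0 1 1 1 ![0, 1/2] ![1/2, 1/2] (by simp) (by simp)
    (fun i => 2 * z i)
  have x4 := theta2_sq_expand hΩ 1 0 1 0 ![1/2, 0] ![1/2, 0] (by simp) (by simp) (fun i => 2 * z i)
  have x5 := theta2_sq_expand hΩ 1 0 1 1 ![1/2, 0] ![1/2, 1/2] (by simp) (by simp)
    (fun i => 2 * z i)
  have x6 := theta2_sq_expand hΩ 1 1 1 0 ![1/2, 1/2] ![1/2, 0] (by simp) (by simp)
    (fun i => 2 * z i)
  simp only [h0, Nat.reduceAdd, r20, r02] at a1 a2 a3 a4 a5 a6 a7 a8 a9 x1 x2 x4 x5 x6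
  unfold A₁ A₂ A₃ A₄ A₅ A₆ A₇ A₈ A₉ X₁ X₂ X₄ X₅ X₆
  rw [a1, a2, a3, a4, a5, a6, a7, a8, a9, x1, x2, x4, x5, x6]
  refine ⟨?_, ?_, ?_⟩ <;> ring
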